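/- Let n ≥ 1 be a natural number, M = ⌊√n⌋, and let μ > 0 and d ≥ 0 be real numbers. Suppose the set {1,…,M} is partitioned into w parts A_1,…,A_w, and for each t ∈ {1,…,w} there is a function m^t : {1,…,n} → ℝ with m^t_j ≥ 0 for all j, Σ_{j=1}^{n} m^t_j ≤ n, and μ·(n/j − 1) ≤ m^t_j/2 + d for every j ∈ A_t. Then w ≥ μ·ln(n)/(1 + 2(d+μ)). -/

import Mathlib

/-!
Write `M = ⌊√n⌋`. Every `j ≤ M` lies in some part `A t`, so the demand `2 (μ (n / j - 1) - d)` is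
at most `m t j`, hence at most the sum of `m s j` over all parts `s`. Summing over `j ≤ M` and
exchanging the sums, the total demand `2 (μ n H_M - (d + μ) M)` is at most `w n`. Since `M ≤ n`,
dividing by `n` leaves `2 μ H_M ≤ w + 2 (d + μ)`. Finally `2 H_M ≥ 2 log (M + 1) ≥ log n`, and
`w ≥ 1` absorbs the additive term.
-/

theorem log_le_two_mul_harmonic_sqrt (n : ℕ) : Real.log n ≤ 2 * harmonic n.sqrt := by
  rcases n.eq_zero_or_pos with rfl | hn
  · simp
  have hn_le : (n : ℝ) ≤ ((n.sqrt + 1 : ℕ) : ℝ) ^ 2 := mod_cast (Nat.lt_succ_sqrt' n).le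
  calc Real.log n
      ≤ Real.log (((n.sqrt + 1 : ℕ) : ℝ) ^ 2) := Real.log_le_log (mod_cast hn) hn_le
    _ = 2 * Real.log (n.sqrt + 1 : ℕ) := by rw [Real.log_pow, Nat.cast_ofNat]
    _ ≤ 2 * harmonic n.sqrt := by gcongr; exact log_add_one_le_harmonic _

theorem sum_le_card_nsmul_of_forall_exists_le {ι α R : Type*} [Fintype ι] [AddCommMonoid R]
    [PartialOrder R] [IsOrderedAddMonoid R] {s u : Finset α} {f : α → R} {m : ι → α → R} {b : R}
    (hsu : s ⊆ u) (hm : ∀ i, ∀ a ∈ u, 0 ≤ m i a) (hsum : ∀ i, ∑ a ∈ u, m i a ≤ b)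
    (hf : ∀ a ∈ s, ∃ i, f a ≤ m i a) : ∑ a ∈ s, f a ≤ Fintype.card ι • b := by
  have hf_le : ∀ a ∈ s, f a ≤ ∑ i, m i a := fun a ha ↦
    let ⟨i, hi⟩ := hf a ha
    hi.trans <| Finset.single_le_sum (fun k _ ↦ hm k a (hsu ha)) (Finset.mem_univ i)
  calc ∑ a ∈ s, f a
      ≤ ∑ a ∈ s, ∑ i, m i a := Finset.sum_le_sum hf_le
    _ = ∑ i, ∑ a ∈ s, m i a := Finset.sum_comm
    _ ≤ ∑ i, ∑ a ∈ u, m i a := Finset.sum_le_sum fun i _ ↦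
        Finset.sum_le_sum_of_subset_of_nonneg hsu fun a ha _ ↦ hm i a ha
    _ ≤ Fintype.card ι • b := Finset.sum_le_card_nsmul _ _ _ fun i _ ↦ hsum i

theorem sum_Icc_mul_div_sub_one_sub {K : Type*} [Field K] [CharZero K] (μ d x : K) (M : ℕ) :
    ∑ j ∈ Finset.Icc 1 M, (μ * (x / j - 1) - d) = μ * x * harmonic M - (d + μ) * M := by
  have hterm (j : ℕ) : μ * (x / j - 1) - d = μ * x * (j : K)⁻¹ - (d + μ) := by ring
  simp only [hterm, Finset.sum_sub_distrib, ← Finset.mul_sum, Finset.sum_const, Nat.card_Icc,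
    add_tsub_cancel_right, nsmul_eq_mul, harmonic_eq_sum_Icc, Rat.cast_sum, Rat.cast_inv,
    Rat.cast_natCast, mul_comm (M : K)]

section Covering

variable {ι : Type*} [Fintype ι] {n : ℕ} {μ d : ℝ} {m : ι → ℕ → ℝ}

theorem mul_log_le_card_add (hn : 1 ≤ n) (hμ : 0 ≤ μ) (hdμ : 0 ≤ d + μ)
    (hm : ∀ t, ∀ j ∈ Finset.Icc 1 n, 0 ≤ m t j) (hsum : ∀ t, ∑ j ∈ Finset.Icc 1 n, m t j ≤ n)
    (hcover : ∀ j ∈ Finset.Icc 1 n.sqrt, ∃ t, μ * ((n : ℝ) / j - 1) ≤ m t j / 2 + d) :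
    μ * Real.log n ≤ Fintype.card ι + 2 * (d + μ) := by
  have hn_pos : (0 : ℝ) < n := mod_cast hn
  have hsqrt : (n.sqrt : ℝ) ≤ n := mod_cast n.sqrt_le_self
  have hdemand : ∑ j ∈ Finset.Icc 1 n.sqrt, 2 * (μ * ((n : ℝ) / j - 1) - d) ≤
      Fintype.card ι • (n : ℝ) :=
    sum_le_card_nsmul_of_forall_exists_le (Finset.Icc_subset_Icc_right n.sqrt_le_self) hm hsum
      fun j hj ↦ (hcover j hj).imp fun t ht ↦ by linarith
  rw [← Finset.mul_sum, sum_Icc_mul_div_sub_one_sub, nsmul_eq_mul] at hdemand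
  have hharmonic : μ * (2 * harmonic n.sqrt) ≤ Fintype.card ι + 2 * (d + μ) := by
    refine le_of_mul_le_mul_left ?_ hn_pos
    linarith [mul_le_mul_of_nonneg_left hsqrt hdμ]
  exact (mul_le_mul_of_nonneg_left (log_le_two_mul_harmonic_sqrt n) hμ).trans hharmonic

theorem stmt8_general (hn : 1 ≤ n) (hμ : 0 ≤ μ) (hdμ : 0 ≤ d + μ)
    (hm : ∀ t, ∀ j ∈ Finset.Icc 1 n, 0 ≤ m t j) (hsum : ∀ t, ∑ j ∈ Finset.Icc 1 n, m t j ≤ n)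
    (hcover : ∀ j ∈ Finset.Icc 1 n.sqrt, ∃ t, μ * ((n : ℝ) / j - 1) ≤ m t j / 2 + d) :
    μ * Real.log n / (1 + 2 * (d + μ)) ≤ Fintype.card ι := by
  obtain ⟨t, -⟩ := hcover 1 (Finset.mem_Icc.2 ⟨le_rfl, Nat.sqrt_pos.2 hn⟩)
  have hcard : (1 : ℝ) ≤ Fintype.card ι := mod_cast Fintype.card_pos_iff.2 ⟨t⟩
  rw [div_le_iff₀ (by linarith)]
  calc μ * Real.log n
      ≤ Fintype.card ι + 2 * (d + μ) := mul_log_le_card_add hn hμ hdμ hm hsum hcover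
    _ ≤ Fintype.card ι + Fintype.card ι * (2 * (d + μ)) := by
        gcongr _ + ?_
        exact le_mul_of_one_le_left (by positivity) hcard
    _ = Fintype.card ι * (1 + 2 * (d + μ)) := by ring

end Covering

theorem stmt8 (n : ℕ) (hn : 1 ≤ n) (μ d : ℝ) (hμ : 0 < μ) (hd : 0 ≤ d)
    (w : ℕ) (A : Fin w → Finset ℕ)
    (hdisj : ∀ s t : Fin w, s ≠ t → Disjoint (A s) (A t))
    (hcover : Finset.univ.biUnion A = Finset.Icc 1 (Nat.sqrt n))
    (m : Fin w → ℕ → ℝ)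
    (hm0 : ∀ t, ∀ j ∈ Finset.Icc 1 n, 0 ≤ m t j)
    (hmsum : ∀ t, ∑ j ∈ Finset.Icc 1 n, m t j ≤ n)
    (hineq : ∀ t, ∀ j ∈ A t, μ * ((n : ℝ) / j - 1) ≤ m t j / 2 + d) :
    (w : ℝ) ≥ μ * Real.log n / (1 + 2 * (d + μ)) := by
  simpa using stmt8_general hn hμ.le (by positivity) hm0 hmsum fun j hj ↦
    let ⟨t, _, hjt⟩ := Finset.mem_biUnion.1 (hcover ▸ hj)
    ⟨t, hineq t j hjt⟩
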